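/- Define, for f ∈ L²(ℝ²;ℂ^d), the operator S̃f(x,y) = (Σ_{I∈𝒟} (M₂‖⟨f,h_I⟩₁‖_{ℂ^d})(y)² · 1_I(x)/|I|)^{1/2}, where ⟨f,h_I⟩₁(y) = ∫_ℝ f(x,y) h_I(x) dx and M₂ is the one-dimensional Hardy–Littlewood maximal operator acting in the variable y. Then there is an absolute constant C such that ‖S̃f‖_{L²(ℝ²)} ≤ C ‖f‖_{L²(ℝ²;ℂ^d)} for all f ∈ L²(ℝ²;ℂ^d). -/

import Mathlib

/-!
At the exponent `2` no vector-valued maximal inequality is needed: the square of the `L²` norm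
of `S̃f` decouples over the dyadic intervals. Integrating in `x` first, the factor `1_I(x)/|I|`
has integral `1`, so `‖S̃f‖₂² = Σ_I ‖M g_I‖₂²` with `g_I(y) = ‖⟨f, h_I⟩₁(y)‖`. The scalar
maximal theorem `‖M g‖₂² ≤ 40 ‖g‖₂²` (`maxFn_L2`) bounds this by `40 Σ_I ‖g_I‖₂²`, and Bessel's
inequality for the Haar system on each horizontal line and for each coordinate of `f`
(`bessel_haar`) bounds the latter sum by `‖f‖₂²`. As `40 ≤ 7²`, the constant `7` works.

The maximal theorem is obtained from the weak-type `(1,1)` bound `maxFn_weak` (Vitali covering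
lemma) applied at height `r/2` to `G 1_{G > r/2}`, and integration over all levels `r`.

Orthonormality of the Haar functions (`integral_haar_mul`) rests on describing dyadic intervals
by `x ∈ I_{j,k} ↔ ⌊x 2^j⌋ = k`: the floor at generation `j'` determines the floors at all coarser
generations, so a Haar function is constant on the support of any Haar function of a finer
generation, and the latter has mean zero.
-/

open MeasureTheory Filter Set Matrix ENNReal Topology ComplexOrder

noncomputable section

/-- The dyadic interval `[k·2^{-j}, (k+1)·2^{-j})`. -/
def dyadicI (j k : ℤ) : Set ℝ :=
  Set.Ico ((k : ℝ) * (2 : ℝ) ^ (-j)) (((k : ℝ) + 1) * (2 : ℝ) ^ (-j))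

/-- The dyadic rectangle `I × J` indexed by `q = ((j,k),(j',k'))`. -/
def dyadicRect (q : (ℤ × ℤ) × (ℤ × ℤ)) : Set (ℝ × ℝ) :=
  (dyadicI q.1.1 q.1.2) ×ˢ (dyadicI q.2.1 q.2.2)

/-- The Haar function `h_I = |I|^{-1/2} (1_{I₋} - 1_{I₊})` of the dyadic interval indexed
by `(j,k)`; its left and right halves are the dyadic intervals `(j+1, 2k)` and `(j+1, 2k+1)`. -/
def haar (j k : ℤ) (x : ℝ) : ℝ :=
  Real.sqrt ((2 : ℝ) ^ j) *
    ((dyadicI (j + 1) (2 * k)).indicator (fun _ => (1 : ℝ)) x -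
      (dyadicI (j + 1) (2 * k + 1)).indicator (fun _ => (1 : ℝ)) x)

/-- The non-cancellative Haar function `h_I¹ = |I|^{-1/2} 1_I`. -/
def haarOne (j k : ℤ) (x : ℝ) : ℝ :=
  Real.sqrt ((2 : ℝ) ^ j) * (dyadicI j k).indicator (fun _ => (1 : ℝ)) x

/-- The two-parameter Haar function `h_{I×J} = h_I ⊗ h_J`. -/
def haar2 (q : (ℤ × ℤ) × (ℤ × ℤ)) (p : ℝ × ℝ) : ℝ :=
  haar q.1.1 q.1.2 p.1 * haar q.2.1 q.2.2 p.2

/-- The dyadic parent of the dyadic interval indexed by `(j,k)`. -/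
def dyadicParent (q : ℤ × ℤ) : ℤ × ℤ := (q.1 - 1, Int.ediv q.2 2)

/-- Matrix-valued Haar coefficient `B̂(R) = ∫ B h_R` (entrywise). -/
def hatM (d : ℕ) (B : ℝ × ℝ → Matrix (Fin d) (Fin d) ℂ) (q : (ℤ × ℤ) × (ℤ × ℤ)) :
    Matrix (Fin d) (Fin d) ℂ :=
  Matrix.of fun i l => ∫ p : ℝ × ℝ, B p i l * (haar2 q p : ℂ)

/-- Vector-valued Haar coefficient `f̂(R) = ⟨f, h_R⟩ ∈ ℂ^d`. -/
def hatV (d : ℕ) (f : ℝ × ℝ → Fin d → ℂ) (q : (ℤ × ℤ) × (ℤ × ℤ)) (i : Fin d) : ℂ :=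
  ∫ p : ℝ × ℝ, f p i * (haar2 q p : ℂ)

/-- Scalar Haar coefficient `b̂(R) = ∫ b h_R`. -/
def hatS (b : ℝ × ℝ → ℂ) (q : (ℤ × ℤ) × (ℤ × ℤ)) : ℂ :=
  ∫ p : ℝ × ℝ, b p * (haar2 q p : ℂ)

/-- Mixed wavelet coefficient `⟨f, g₁ ⊗ g₂⟩ ∈ ℂ^d`. -/
def coefMix (d : ℕ) (f : ℝ × ℝ → Fin d → ℂ) (g₁ g₂ : ℝ → ℝ) (i : Fin d) : ℂ :=
  ∫ p : ℝ × ℝ, f p i * ((g₁ p.1 * g₂ p.2 : ℝ) : ℂ)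

/-- The positive-semidefinite (Loewner) order on `d × d` complex matrices. -/
def matLE {d : ℕ} (A B : Matrix (Fin d) (Fin d) ℂ) : Prop := (B - A).PosSemidef

/-- `B` satisfies the two dyadic product BMO inequalities with constant `C`:
for every open set `U ⊆ ℝ²` of finite nonzero measure,
`(1/|U|) Σ_{R ⊆ U} B̂(R)B̂(R)* ≤ C² I_d` and `(1/|U|) Σ_{R ⊆ U} B̂(R)*B̂(R) ≤ C² I_d`. -/
def BMOCond (d : ℕ) (B : ℝ × ℝ → Matrix (Fin d) (Fin d) ℂ) (C : ℝ) : Prop :=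
  ∀ U : Set (ℝ × ℝ), IsOpen U → volume U ≠ 0 → volume U ≠ ⊤ →
    matLE (∑' q : {q : (ℤ × ℤ) × (ℤ × ℤ) // dyadicRect q ⊆ U},
        ((volume U).toReal)⁻¹ • (hatM d B q.1 * (hatM d B q.1)ᴴ))
      ((C ^ 2) • (1 : Matrix (Fin d) (Fin d) ℂ)) ∧
    matLE (∑' q : {q : (ℤ × ℤ) × (ℤ × ℤ) // dyadicRect q ⊆ U},
        ((volume U).toReal)⁻¹ • ((hatM d B q.1)ᴴ * hatM d B q.1))
      ((C ^ 2) • (1 : Matrix (Fin d) (Fin d) ℂ))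

/-- The dyadic product BMO norm: the least admissible constant. -/
def bmoNorm (d : ℕ) (B : ℝ × ℝ → Matrix (Fin d) (Fin d) ℂ) : ℝ :=
  sInf {C : ℝ | 0 ≤ C ∧ BMOCond d B C}

/-- The `L²(ℝ²; ℂ^d)` norm (with the Euclidean norm on `ℂ^d`). -/
def L2V (d : ℕ) (f : ℝ × ℝ → Fin d → ℂ) : ℝ≥0∞ :=
  eLpNorm (fun p => (WithLp.equiv 2 (Fin d → ℂ)).symm (f p)) 2 volume

/-- Hilbert transform in the first variable, as an a.e. principal value. -/
def H1s (f : ℝ × ℝ → ℂ) (p : ℝ × ℝ) : ℂ :=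
  limUnder (𝓝[>] (0 : ℝ)) fun ε : ℝ =>
    (Real.pi : ℂ)⁻¹ * ∫ z in {z : ℝ | ε < |p.1 - z|}, f (z, p.2) / ((p.1 - z : ℝ) : ℂ)

/-- Hilbert transform in the second variable. -/
def H2s (f : ℝ × ℝ → ℂ) (p : ℝ × ℝ) : ℂ :=
  limUnder (𝓝[>] (0 : ℝ)) fun ε : ℝ =>
    (Real.pi : ℂ)⁻¹ * ∫ z in {z : ℝ | ε < |p.2 - z|}, f (p.1, z) / ((p.2 - z : ℝ) : ℂ)

/-- Componentwise Hilbert transform in the first variable. -/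
def H1v (d : ℕ) (f : ℝ × ℝ → Fin d → ℂ) (p : ℝ × ℝ) (i : Fin d) : ℂ :=
  H1s (fun q => f q i) p

/-- Componentwise Hilbert transform in the second variable. -/
def H2v (d : ℕ) (f : ℝ × ℝ → Fin d → ℂ) (p : ℝ × ℝ) (i : Fin d) : ℂ :=
  H2s (fun q => f q i) p

/-- The iterated commutator `[[M_B, H₁], H₂] f = B H₁H₂ f − H₁(B H₂ f) − H₂(B H₁ f) + H₂H₁(Bf)`. -/
def commH (d : ℕ) (B : ℝ × ℝ → Matrix (Fin d) (Fin d) ℂ) (f : ℝ × ℝ → Fin d → ℂ) :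
    ℝ × ℝ → Fin d → ℂ := fun p =>
  (B p).mulVec (H1v d (H2v d f) p) - H1v d (fun q => (B q).mulVec (H2v d f q)) p
    - H2v d (fun q => (B q).mulVec (H1v d f q)) p
    + H2v d (H1v d (fun q => (B q).mulVec (f q))) p

/-- The scalar iterated commutator `[[M_b, H₁], H₂] f`. -/
def commHs (b f : ℝ × ℝ → ℂ) : ℝ × ℝ → ℂ := fun p =>
  b p * H1s (H2s f) p - H1s (fun q => b q * H2s f q) p - H2s (fun q => b q * H1s f q) p
    + H2s (H1s (fun q => b q * f q)) p

/-- The dyadic-shift image of the Haar function: `Ш(h_I) = (h_{I₋} - h_{I₊})/√2`. -/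
def shHaar (j k : ℤ) (x : ℝ) : ℝ :=
  (haar (j + 1) (2 * k) x - haar (j + 1) (2 * k + 1) x) / Real.sqrt 2

/-- The dyadic shift `Ш f = Σ_{I} ⟨f, h_I⟩ (h_{I₋} - h_{I₊})/√2`, realized pointwise as the
limit of its scale-truncated partial sums. -/
def ShS (f : ℝ → ℂ) (x : ℝ) : ℂ :=
  limUnder atTop fun N : ℕ =>
    ∑ j ∈ Finset.Icc (-(N : ℤ)) (N : ℤ),
      ∑' k : ℤ, (∫ t : ℝ, f t * (haar j k t : ℂ)) * (shHaar j k x : ℂ)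

/-- The dyadic shift in the first variable of a `ℂ^d`-valued function on `ℝ²`. -/
def Sh1 (d : ℕ) (f : ℝ × ℝ → Fin d → ℂ) (p : ℝ × ℝ) (i : Fin d) : ℂ :=
  ShS (fun t => f (t, p.2) i) p.1

/-- The dyadic shift in the second variable of a `ℂ^d`-valued function on `ℝ²`. -/
def Sh2 (d : ℕ) (f : ℝ × ℝ → Fin d → ℂ) (p : ℝ × ℝ) (i : Fin d) : ℂ :=
  ShS (fun t => f (p.1, t) i) p.2

/-- The iterated commutator `[[M_B, Ш₁], Ш₂] f`. -/
def commSh (d : ℕ) (B : ℝ × ℝ → Matrix (Fin d) (Fin d) ℂ) (f : ℝ × ℝ → Fin d → ℂ) :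
    ℝ × ℝ → Fin d → ℂ := fun p =>
  (B p).mulVec (Sh1 d (Sh2 d f) p) - Sh1 d (fun q => (B q).mulVec (Sh2 d f q)) p
    - Sh2 d (fun q => (B q).mulVec (Sh1 d f q)) p
    + Sh2 d (Sh1 d (fun q => (B q).mulVec (f q))) p

/-- One-parameter commutator with the dyadic shift: `[M_g, Ш] u = g·Шu − Ш(gu)`. -/
def commShS (g u : ℝ → ℂ) : ℝ → ℂ := fun x => g x * ShS u x - ShS (fun t => g t * u t) x


/-- Paraproduct `P¹_B f = Σ_{I,J} ε_J B̂(I×J̃) ⟨f, h_I ⊗ h_J⟩ h_I¹ ⊗ h_J |I|^{-1/2}|J̃|^{-1/2}`. -/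
def P1 (d : ℕ) (B : ℝ × ℝ → Matrix (Fin d) (Fin d) ℂ) (ε : ℤ × ℤ → ℝ)
    (f : ℝ × ℝ → Fin d → ℂ) (p : ℝ × ℝ) : Fin d → ℂ :=
  ∑' q : (ℤ × ℤ) × (ℤ × ℤ),
    ((ε q.2 * (haarOne q.1.1 q.1.2 p.1 * haar q.2.1 q.2.2 p.2) *
        (Real.sqrt ((2 : ℝ) ^ q.1.1) * Real.sqrt ((2 : ℝ) ^ (dyadicParent q.2).1)) : ℝ) : ℂ) •
      (hatM d B (q.1, dyadicParent q.2)).mulVec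
        (coefMix d f (haar q.1.1 q.1.2) (haar q.2.1 q.2.2))

/-- Paraproduct `P²_B f = Σ_{I,J} ε_J B̂(I×J̃) ⟨f, h_I¹ ⊗ h_{J̃}⟩ h_I ⊗ h_J |I|^{-1/2}|J̃|^{-1/2}`. -/
def P2 (d : ℕ) (B : ℝ × ℝ → Matrix (Fin d) (Fin d) ℂ) (ε : ℤ × ℤ → ℝ)
    (f : ℝ × ℝ → Fin d → ℂ) (p : ℝ × ℝ) : Fin d → ℂ :=
  ∑' q : (ℤ × ℤ) × (ℤ × ℤ),
    ((ε q.2 * (haar q.1.1 q.1.2 p.1 * haar q.2.1 q.2.2 p.2) *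
        (Real.sqrt ((2 : ℝ) ^ q.1.1) * Real.sqrt ((2 : ℝ) ^ (dyadicParent q.2).1)) : ℝ) : ℂ) •
      (hatM d B (q.1, dyadicParent q.2)).mulVec
        (coefMix d f (haarOne q.1.1 q.1.2) (haar (dyadicParent q.2).1 (dyadicParent q.2).2))

/-- Paraproduct `P³_B f = Σ_{I,J} B̂(I×J) ⟨f, h_I¹ ⊗ h_J¹⟩ h_I ⊗ h_J |I|^{-1/2}|J|^{-1/2}`. -/
def P3 (d : ℕ) (B : ℝ × ℝ → Matrix (Fin d) (Fin d) ℂ)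
    (f : ℝ × ℝ → Fin d → ℂ) (p : ℝ × ℝ) : Fin d → ℂ :=
  ∑' q : (ℤ × ℤ) × (ℤ × ℤ),
    (((haar q.1.1 q.1.2 p.1 * haar q.2.1 q.2.2 p.2) *
        (Real.sqrt ((2 : ℝ) ^ q.1.1) * Real.sqrt ((2 : ℝ) ^ q.2.1)) : ℝ) : ℂ) •
      (hatM d B q).mulVec (coefMix d f (haarOne q.1.1 q.1.2) (haarOne q.2.1 q.2.2))

/-- Paraproduct `P⁴_B f = Σ_{I,J} B̂(I×J) ⟨f, h_I ⊗ h_J¹⟩ h_I¹ ⊗ h_J |I|^{-1/2}|J|^{-1/2}`. -/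
def P4 (d : ℕ) (B : ℝ × ℝ → Matrix (Fin d) (Fin d) ℂ)
    (f : ℝ × ℝ → Fin d → ℂ) (p : ℝ × ℝ) : Fin d → ℂ :=
  ∑' q : (ℤ × ℤ) × (ℤ × ℤ),
    (((haarOne q.1.1 q.1.2 p.1 * haar q.2.1 q.2.2 p.2) *
        (Real.sqrt ((2 : ℝ) ^ q.1.1) * Real.sqrt ((2 : ℝ) ^ q.2.1)) : ℝ) : ℂ) •
      (hatM d B q).mulVec (coefMix d f (haar q.1.1 q.1.2) (haarOne q.2.1 q.2.2))

/-- Paraproduct `P⁵_B f = Σ_{I,J} B̂(I×J) ⟨f, h_I¹ ⊗ h_J⟩ h_I ⊗ h_J¹ |I|^{-1/2}|J|^{-1/2}`. -/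
def P5 (d : ℕ) (B : ℝ × ℝ → Matrix (Fin d) (Fin d) ℂ)
    (f : ℝ × ℝ → Fin d → ℂ) (p : ℝ × ℝ) : Fin d → ℂ :=
  ∑' q : (ℤ × ℤ) × (ℤ × ℤ),
    (((haar q.1.1 q.1.2 p.1 * haarOne q.2.1 q.2.2 p.2) *
        (Real.sqrt ((2 : ℝ) ^ q.1.1) * Real.sqrt ((2 : ℝ) ^ q.2.1)) : ℝ) : ℂ) •
      (hatM d B q).mulVec (coefMix d f (haarOne q.1.1 q.1.2) (haar q.2.1 q.2.2))

/-- The matrix-valued bilinear paraproduct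
`Π₁(f,g) = Σ_{I,J} ⟨g, h_I ⊗ h_J⟩ ⟨f, h_I¹ ⊗ h_J¹⟩* h_I ⊗ h_J |I|^{-1/2}|J|^{-1/2}`. -/
def Pi1 (d : ℕ) (f g : ℝ × ℝ → Fin d → ℂ) (p : ℝ × ℝ) : Matrix (Fin d) (Fin d) ℂ :=
  ∑' q : (ℤ × ℤ) × (ℤ × ℤ),
    (((haar q.1.1 q.1.2 p.1 * haar q.2.1 q.2.2 p.2) *
        (Real.sqrt ((2 : ℝ) ^ q.1.1) * Real.sqrt ((2 : ℝ) ^ q.2.1)) : ℝ) : ℂ) •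
      Matrix.of (fun i l =>
        coefMix d g (haar q.1.1 q.1.2) (haar q.2.1 q.2.2) i *
          (starRingEnd ℂ) (coefMix d f (haarOne q.1.1 q.1.2) (haarOne q.2.1 q.2.2) l))

/-- The matrix-valued bilinear paraproduct
`Π₂(f,g) = Σ_{I,J} ⟨g, h_I¹ ⊗ h_J⟩ ⟨f, h_I ⊗ h_J¹⟩* h_I ⊗ h_J |I|^{-1/2}|J|^{-1/2}`. -/
def Pi2 (d : ℕ) (f g : ℝ × ℝ → Fin d → ℂ) (p : ℝ × ℝ) : Matrix (Fin d) (Fin d) ℂ :=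
  ∑' q : (ℤ × ℤ) × (ℤ × ℤ),
    (((haar q.1.1 q.1.2 p.1 * haar q.2.1 q.2.2 p.2) *
        (Real.sqrt ((2 : ℝ) ^ q.1.1) * Real.sqrt ((2 : ℝ) ^ q.2.1)) : ℝ) : ℂ) •
      Matrix.of (fun i l =>
        coefMix d g (haarOne q.1.1 q.1.2) (haar q.2.1 q.2.2) i *
          (starRingEnd ℂ) (coefMix d f (haar q.1.1 q.1.2) (haarOne q.2.1 q.2.2) l))

/-- The squared Hilbert–Schmidt (Frobenius) norm of a matrix. -/
def hsSq {d : ℕ} (A : Matrix (Fin d) (Fin d) ℂ) : ℝ := ∑ i, ∑ l, ‖A i l‖ ^ 2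

/-- The dyadic square function of a matrix-valued function on `ℝ²`:
`S(F)(x,y) = (Σ_R ‖F̂(R)‖_{HS}² 1_R(x,y)/|R|)^{1/2}`. -/
def sqFnM (d : ℕ) (F : ℝ × ℝ → Matrix (Fin d) (Fin d) ℂ) (p : ℝ × ℝ) : ℝ :=
  Real.sqrt (∑' q : (ℤ × ℤ) × (ℤ × ℤ),
    hsSq (hatM d F q) * (dyadicRect q).indicator (fun _ => (1 : ℝ)) p * (2 : ℝ) ^ (q.1.1 + q.2.1))

/-- The dyadic square function of a `ℂ^d`-valued function on `ℝ²`. -/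
def sqFnV (d : ℕ) (g : ℝ × ℝ → Fin d → ℂ) (p : ℝ × ℝ) : ℝ :=
  Real.sqrt (∑' q : (ℤ × ℤ) × (ℤ × ℤ),
    (∑ i, ‖hatV d g q i‖ ^ 2) * (dyadicRect q).indicator (fun _ => (1 : ℝ)) p *
      (2 : ℝ) ^ (q.1.1 + q.2.1))

/-- The pointwise Euclidean norm `‖f(p)‖_{ℂ^d}`. -/
def vnorm (d : ℕ) (f : ℝ × ℝ → Fin d → ℂ) (p : ℝ × ℝ) : ℝ := Real.sqrt (∑ i, ‖f p i‖ ^ 2)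

/-- The strong (dyadic-rectangle) maximal function. -/
def strongMax (u : ℝ × ℝ → ℝ) (p : ℝ × ℝ) : ℝ≥0∞ :=
  ⨆ (q : (ℤ × ℤ) × (ℤ × ℤ)) (_ : p ∈ dyadicRect q),
    (volume (dyadicRect q))⁻¹ * ∫⁻ x in dyadicRect q, ENNReal.ofReal |u x|

/-- The one-dimensional Hardy–Littlewood maximal function. -/
def M1D (u : ℝ → ℝ) (y : ℝ) : ℝ≥0∞ :=
  ⨆ (a : ℝ) (b : ℝ) (_ : y ∈ Set.Ioo a b),
    (volume (Set.Ioo a b))⁻¹ * ∫⁻ t in Set.Ioo a b, ENNReal.ofReal |u t|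

/-- Average of `f` over the dyadic rectangle indexed by `q`. -/
def rectAvg (f : ℝ × ℝ → ℝ) (q : (ℤ × ℤ) × (ℤ × ℤ)) : ℝ :=
  ((volume (dyadicRect q)).toReal)⁻¹ * ∫ p in dyadicRect q, f p

/-- The scalar dyadic product BMO condition with constant `C`. -/
def scalarBMOCond (b : ℝ × ℝ → ℂ) (C : ℝ) : Prop :=
  ∀ U : Set (ℝ × ℝ), IsOpen U → volume U ≠ 0 → volume U ≠ ⊤ →
    ((volume U).toReal)⁻¹ *
      (∑' q : {q : (ℤ × ℤ) × (ℤ × ℤ) // dyadicRect q ⊆ U}, ‖hatS b q.1‖ ^ 2) ≤ C ^ 2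

/-- The scalar dyadic product BMO norm, as a supremum over open sets. -/
def scalarBmoNorm (b : ℝ × ℝ → ℂ) : ℝ :=
  ⨆ U : Set (ℝ × ℝ), ⨆ (_ : IsOpen U ∧ volume U ≠ 0 ∧ volume U ≠ ⊤),
    Real.sqrt (((volume U).toReal)⁻¹ *
      ∑' q : {q : (ℤ × ℤ) × (ℤ × ℤ) // dyadicRect q ⊆ U}, ‖hatS b q.1‖ ^ 2)

/-! ### The Hardy–Littlewood maximal operator on `L²(ℝ)` -/

/-- The uncentred Hardy–Littlewood maximal function of a `ℝ≥0∞`-valued function; `M1D u` is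
by definition `maxFn` of `|u|`. -/
def maxFn (G : ℝ → ℝ≥0∞) (y : ℝ) : ℝ≥0∞ :=
  ⨆ (a : ℝ) (b : ℝ) (_ : y ∈ Set.Ioo a b),
    (volume (Set.Ioo a b))⁻¹ * ∫⁻ t in Set.Ioo a b, G t

/-- The intervals `(a, b)`, as pairs, on which the average of `G` exceeds `c`. -/
def heavy (G : ℝ → ℝ≥0∞) (c : ℝ≥0∞) : Set (ℝ × ℝ) :=
  {p | p.1 < p.2 ∧ c * ENNReal.ofReal (p.2 - p.1) < ∫⁻ t in Set.Ioo p.1 p.2, G t}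

lemma setOf_lt_maxFn (G : ℝ → ℝ≥0∞) (c : ℝ≥0∞) :
    {y | c < maxFn G y} = ⋃ p ∈ heavy G c, Set.Ioo p.1 p.2 := by
  ext y
  simp only [mem_ofPred_eq, maxFn, lt_iSup_iff, mem_iUnion, heavy, Prod.exists, exists_prop]
  refine exists_congr fun a => exists_congr fun b => ?_
  constructor
  · rintro ⟨hy, h⟩
    have hab : a < b := hy.1.trans hy.2
    refine ⟨⟨hab, ?_⟩, hy⟩
    rw [Real.volume_Ioo, mul_comm, ← div_eq_mul_inv, ENNReal.lt_div_iff_mul_lt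
      (Or.inl (by simpa using hab)) (Or.inl ENNReal.ofReal_ne_top)] at h
    exact h
  · rintro ⟨⟨hab, h⟩, hy⟩
    refine ⟨hy, ?_⟩
    rw [Real.volume_Ioo, mul_comm, ← div_eq_mul_inv, ENNReal.lt_div_iff_mul_lt
      (Or.inl (by simpa using hab)) (Or.inl ENNReal.ofReal_ne_top)]
    exact h

lemma measurable_maxFn (G : ℝ → ℝ≥0∞) : Measurable (maxFn G) := by
  refine measurable_of_Ioi fun c => ?_
  have : maxFn G ⁻¹' Ioi c = ⋃ p ∈ heavy G c, Set.Ioo p.1 p.2 := setOf_lt_maxFn G c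
  rw [this]
  exact (isOpen_biUnion fun p _ => isOpen_Ioo).measurableSet

/-- Weak-type `(1,1)` bound, from the Vitali covering lemma with dilation factor `5`. -/
lemma maxFn_weak (G : ℝ → ℝ≥0∞) (c : ℝ≥0∞) (hc : c ≠ 0) (hc' : c ≠ ⊤) :
    c * volume {y | c < maxFn G y} ≤ 5 * ∫⁻ t, G t := by
  by_cases hG : ∫⁻ t, G t = ⊤
  · simp [hG]
  rw [setOf_lt_maxFn]
  have hrad : ∀ p ∈ heavy G c, (p.2 - p.1) / 2 ≤ ((∫⁻ t, G t) / c).toReal := by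
    rintro ⟨a, b⟩ ⟨hab, h⟩
    dsimp only at hab h ⊢
    have h1 : ENNReal.ofReal (b - a) ≤ (∫⁻ t, G t) / c := by
      rw [ENNReal.le_div_iff_mul_le (Or.inl hc) (Or.inl hc'), mul_comm]
      exact h.le.trans (setLIntegral_le_lintegral _ _)
    have h2 := (ENNReal.ofReal_le_iff_le_toReal (ENNReal.div_ne_top hG hc)).1 h1
    linarith
  obtain ⟨u, hut, hdisj, hcov⟩ := Vitali.exists_disjoint_subfamily_covering_enlargement_closedBall
    (heavy G c) (fun p => (p.1 + p.2) / 2) (fun p => (p.2 - p.1) / 2) _ hrad 5 (by norm_num)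
  have hIoo : ∀ p : ℝ × ℝ, Set.Ioo p.1 p.2 ⊆
      Metric.closedBall ((p.1 + p.2) / 2) ((p.2 - p.1) / 2) := by
    rintro ⟨a, b⟩ y ⟨h1, h2⟩
    dsimp only at h1 h2 ⊢
    rw [Real.closedBall_eq_Icc]
    constructor <;> linarith
  have hdisj' : u.PairwiseDisjoint (fun p : ℝ × ℝ => Set.Ioo p.1 p.2) :=
    hdisj.mono fun p => hIoo p
  have hcount : u.Countable := hdisj'.countable_of_isOpen (fun p _ => isOpen_Ioo)
    (fun p hp => nonempty_Ioo.2 (hut hp).1)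
  have hsub : (⋃ p ∈ heavy G c, Set.Ioo p.1 p.2) ⊆
      ⋃ p ∈ u, Metric.closedBall ((p.1 + p.2) / 2) (5 * ((p.2 - p.1) / 2)) := by
    refine iUnion₂_subset fun p hp => ?_
    obtain ⟨b, hb, hpb⟩ := hcov p hp
    exact ((hIoo p).trans hpb).trans (subset_biUnion_of_mem (u := fun p : ℝ × ℝ =>
      Metric.closedBall ((p.1 + p.2) / 2) (5 * ((p.2 - p.1) / 2))) hb)
  calc c * volume (⋃ p ∈ heavy G c, Set.Ioo p.1 p.2)
      ≤ c * ∑' p : u, volume (Metric.closedBall ((p.1.1 + p.1.2) / 2)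
          (5 * ((p.1.2 - p.1.1) / 2))) := by
        gcongr
        exact (measure_mono hsub).trans (measure_biUnion_le _ hcount _)
    _ = ∑' p : u, 5 * (c * ENNReal.ofReal (p.1.2 - p.1.1)) := by
        rw [← ENNReal.tsum_mul_left]
        refine tsum_congr fun p => ?_
        rw [Real.volume_closedBall,
          show 2 * (5 * ((p.1.2 - p.1.1) / 2)) = 5 * (p.1.2 - p.1.1) by ring,
          ENNReal.ofReal_mul (by norm_num), ENNReal.ofReal_ofNat]
        ring
    _ ≤ ∑' p : u, 5 * ∫⁻ t in Set.Ioo p.1.1 p.1.2, G t := by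
        refine ENNReal.tsum_le_tsum fun p => ?_
        gcongr
        exact (hut p.2).2.le
    _ = 5 * ∫⁻ t in ⋃ p ∈ u, Set.Ioo p.1 p.2, G t := by
        rw [ENNReal.tsum_mul_left, lintegral_biUnion hcount (fun p _ => measurableSet_Ioo) hdisj']
    _ ≤ 5 * ∫⁻ t, G t := by
        gcongr
        exact Measure.restrict_le_self

/-- Truncation: the part of `G` of size at most `c` contributes at most `c` to `maxFn G`. -/
lemma maxFn_le_trunc (G : ℝ → ℝ≥0∞) (hG : Measurable G) (c : ℝ≥0∞) (y : ℝ) :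
    maxFn G y ≤ maxFn ({t | c < G t}.indicator G) y + c := by
  refine iSup_le fun a => iSup_le fun b => iSup_le fun hy => ?_
  have hab : a < b := hy.1.trans hy.2
  have hm : MeasurableSet {t | c < G t} := measurableSet_lt measurable_const hG
  have h1 : ∫⁻ t in Set.Ioo a b, G t ≤
      (∫⁻ t in Set.Ioo a b, {t | c < G t}.indicator G t) + c * volume (Set.Ioo a b) := by
    rw [← setLIntegral_const, ← lintegral_add_right _ measurable_const]
    refine lintegral_mono fun t => ?_
    by_cases h : c < G t
    · simp [indicator, h]
    · simpa [indicator, h] using not_lt.1 h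
  have hv0 : volume (Set.Ioo a b) ≠ 0 := by simpa using hab
  have hvt : volume (Set.Ioo a b) ≠ ⊤ := by simp
  calc (volume (Set.Ioo a b))⁻¹ * ∫⁻ t in Set.Ioo a b, G t
      ≤ (volume (Set.Ioo a b))⁻¹ * ((∫⁻ t in Set.Ioo a b, {t | c < G t}.indicator G t)
          + c * volume (Set.Ioo a b)) := by gcongr
    _ = (volume (Set.Ioo a b))⁻¹ * (∫⁻ t in Set.Ioo a b, {t | c < G t}.indicator G t) + c := by
        rw [mul_add, mul_left_comm, ENNReal.inv_mul_cancel hv0 hvt, mul_one]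
    _ ≤ _ := by
        gcongr
        exact le_iSup_of_le a (le_iSup_of_le b (le_iSup_of_le hy le_rfl))

lemma maxFn_weak_trunc (G : ℝ → ℝ≥0∞) (hG : Measurable G) (r : ℝ) (hr : 0 < r) :
    ENNReal.ofReal (2 * r) * volume {y | ENNReal.ofReal r < maxFn G y} ≤
      20 * ∫⁻ t, {t | ENNReal.ofReal (r / 2) < G t}.indicator G t := by
  have h := maxFn_weak ({t | ENNReal.ofReal (r / 2) < G t}.indicator G) (ENNReal.ofReal (r / 2))
    (by simpa using hr) ENNReal.ofReal_ne_top
  have hsub : {y | ENNReal.ofReal r < maxFn G y} ⊆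
      {y | ENNReal.ofReal (r / 2) <
        maxFn ({t | ENNReal.ofReal (r / 2) < G t}.indicator G) y} := by
    intro y hy
    have h2 := lt_of_lt_of_le hy (maxFn_le_trunc G hG (ENNReal.ofReal (r / 2)) y)
    have h3 : ENNReal.ofReal r = ENNReal.ofReal (r / 2) + ENNReal.ofReal (r / 2) := by
      rw [← ENNReal.ofReal_add (by positivity) (by positivity), add_halves]
    rw [h3] at h2
    exact lt_of_add_lt_add_right h2
  calc ENNReal.ofReal (2 * r) * volume {y | ENNReal.ofReal r < maxFn G y}
      ≤ 4 * (ENNReal.ofReal (r / 2) * volume {y | ENNReal.ofReal (r / 2) <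
        maxFn ({t | ENNReal.ofReal (r / 2) < G t}.indicator G) y}) := by
        rw [show 2 * r = 4 * (r / 2) by ring, ENNReal.ofReal_mul (by norm_num),
          ENNReal.ofReal_ofNat, mul_assoc]
        gcongr
    _ ≤ 4 * (5 * ∫⁻ t, {t | ENNReal.ofReal (r / 2) < G t}.indicator G t) := by gcongr
    _ = _ := by rw [← mul_assoc]; norm_num

/-- The layer-cake identity `a² = ∫₀^a 2r dr`, as an inequality valid also for `a = ∞`. -/
lemma sq_le_layer (a : ℝ≥0∞) :
    a ^ 2 ≤ ∫⁻ r in Set.Ioi (0 : ℝ), ENNReal.ofReal (2 * r) *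
      {r : ℝ | ENNReal.ofReal r < a}.indicator 1 r := by
  have key : ∀ x : ℝ, 0 ≤ x → ENNReal.ofReal x ≤ a →
      ENNReal.ofReal x ^ 2 ≤ ∫⁻ r in Set.Ioi (0 : ℝ), ENNReal.ofReal (2 * r) *
        {r : ℝ | ENNReal.ofReal r < a}.indicator 1 r := by
    intro x hx hxa
    have h1 : ENNReal.ofReal x ^ 2 = ∫⁻ r in Set.Ioo 0 x, ENNReal.ofReal (2 * r) := by
      rw [← ofReal_integral_eq_lintegral_ofReal]
      · rw [← ENNReal.ofReal_pow hx, ← integral_Ioc_eq_integral_Ioo,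
          ← intervalIntegral.integral_of_le hx, intervalIntegral.integral_const_mul, integral_id]
        congr 1; ring
      · have hcont : Continuous fun r : ℝ => 2 * r := by fun_prop
        exact (hcont.integrableOn_Icc (a := 0) (b := x)).mono_set Ioo_subset_Icc_self
      · filter_upwards [ae_restrict_mem measurableSet_Ioo] with r hr
        have := hr.1
        simp only [Pi.zero_apply]; positivity
    rw [h1]
    calc ∫⁻ r in Set.Ioo 0 x, ENNReal.ofReal (2 * r)
        ≤ ∫⁻ r in Set.Ioo 0 x, ENNReal.ofReal (2 * r) *
            {r : ℝ | ENNReal.ofReal r < a}.indicator 1 r := by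
          refine setLIntegral_mono' measurableSet_Ioo fun r hr => ?_
          have : ENNReal.ofReal r < a :=
            lt_of_lt_of_le ((ENNReal.ofReal_lt_ofReal_iff (hr.1.trans hr.2)).2 hr.2) hxa
          simp [indicator, this]
      _ ≤ _ := lintegral_mono_set Ioo_subset_Ioi_self
  by_cases ha : a = ⊤
  · have h2 : (⊤ : ℝ≥0∞) ≤ ∫⁻ r in Set.Ioi (0 : ℝ), ENNReal.ofReal (2 * r) *
        {r : ℝ | ENNReal.ofReal r < a}.indicator 1 r := by
      refine ENNReal.le_of_forall_nnreal_lt fun s _ => ?_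
      have h3 := key (s + 1) (by positivity) (by simp [ha])
      refine le_trans ?_ h3
      rw [← ENNReal.ofReal_pow (by positivity), ← ENNReal.ofReal_coe_nnreal]
      refine ENNReal.ofReal_le_ofReal ?_
      nlinarith [s.coe_nonneg]
    exact le_top.trans h2
  · have := key a.toReal ENNReal.toReal_nonneg (by rw [ENNReal.ofReal_toReal ha])
    rwa [ENNReal.ofReal_toReal ha] at this

/-- Strong-type `(2,2)` bound, by integrating the truncated weak-type bound over all levels. -/
lemma maxFn_L2 (G : ℝ → ℝ≥0∞) (hG : Measurable G) :
    ∫⁻ y, maxFn G y ^ 2 ≤ 40 * ∫⁻ t, G t ^ 2 := by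
  have hM := measurable_maxFn G
  have hswap : ∫⁻ y, ∫⁻ r in Set.Ioi (0 : ℝ), ENNReal.ofReal (2 * r) *
      {r : ℝ | ENNReal.ofReal r < maxFn G y}.indicator 1 r =
      ∫⁻ r in Set.Ioi (0 : ℝ), ENNReal.ofReal (2 * r) *
        volume {y | ENNReal.ofReal r < maxFn G y} := by
    rw [lintegral_lintegral_swap]
    · refine lintegral_congr fun r => ?_
      rw [lintegral_const_mul']
      · congr 1
        rw [← lintegral_indicator_one (measurableSet_lt measurable_const hM)]
        rfl
      · exact ENNReal.ofReal_ne_top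
    · refine Measurable.aemeasurable ?_
      refine Measurable.mul (by fun_prop) ?_
      exact (measurable_one.indicator
        (measurableSet_lt (f := fun z : ℝ × ℝ => ENNReal.ofReal z.2)
          (g := fun z : ℝ × ℝ => maxFn G z.1) (by fun_prop) (by fun_prop)))
  have hswap2 : ∫⁻ r in Set.Ioi (0 : ℝ), ∫⁻ t, {t | ENNReal.ofReal (r / 2) < G t}.indicator G t =
      ∫⁻ t, ∫⁻ r in Set.Ioi (0 : ℝ), {t | ENNReal.ofReal (r / 2) < G t}.indicator G t := by
    rw [lintegral_lintegral_swap]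
    refine Measurable.aemeasurable ?_
    exact ((hG.comp measurable_snd).indicator
        (measurableSet_lt (f := fun z : ℝ × ℝ => ENNReal.ofReal (z.1 / 2))
          (g := fun z : ℝ × ℝ => G z.2) (by fun_prop) (by fun_prop)))
  have hlayer : ∀ t, ∫⁻ r in Set.Ioi (0 : ℝ), {t | ENNReal.ofReal (r / 2) < G t}.indicator G t
      ≤ 2 * G t ^ 2 := by
    intro t
    by_cases ht : G t = ⊤
    · simp [ht]
    calc ∫⁻ r in Set.Ioi (0 : ℝ), {t | ENNReal.ofReal (r / 2) < G t}.indicator G t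
        ≤ ∫⁻ r, (Set.Ioo 0 (2 * (G t).toReal)).indicator (fun _ => G t) r := by
          rw [← lintegral_indicator measurableSet_Ioi]
          refine lintegral_mono fun r => ?_
          by_cases hr : 0 < r
          · by_cases h : ENNReal.ofReal (r / 2) < G t
            · have := (ENNReal.ofReal_lt_iff_lt_toReal (by positivity) ht).1 h
              have h2 : r ∈ Set.Ioo 0 (2 * (G t).toReal) := ⟨hr, by linarith⟩
              rw [indicator_of_mem h2]
              simp [indicator, h, hr]
            · simp [indicator, h]
          · simp [indicator, hr]
      _ = 2 * G t ^ 2 := by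
          rw [lintegral_indicator measurableSet_Ioo, setLIntegral_const, Real.volume_Ioo, sub_zero,
            ENNReal.ofReal_mul (by norm_num), ENNReal.ofReal_toReal ht, ENNReal.ofReal_ofNat]
          ring
  calc ∫⁻ y, maxFn G y ^ 2
      ≤ ∫⁻ r in Set.Ioi (0 : ℝ), ENNReal.ofReal (2 * r) *
        volume {y | ENNReal.ofReal r < maxFn G y} := by
        rw [← hswap]
        exact lintegral_mono fun y => sq_le_layer _
    _ ≤ ∫⁻ r in Set.Ioi (0 : ℝ), 20 * ∫⁻ t, {t | ENNReal.ofReal (r / 2) < G t}.indicator G t :=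
        setLIntegral_mono' measurableSet_Ioi fun r hr => maxFn_weak_trunc G hG r hr
    _ ≤ 20 * ∫⁻ t, 2 * G t ^ 2 := by
        rw [lintegral_const_mul' _ _ (by norm_num), hswap2]
        gcongr
        exact hlayer _
    _ = 40 * ∫⁻ t, G t ^ 2 := by
        rw [lintegral_const_mul' _ _ (by norm_num), ← mul_assoc]; norm_num

/-! ### Haar functions -/

lemma mem_dyadicI {j k : ℤ} {x : ℝ} : x ∈ dyadicI j k ↔ ⌊x * (2 : ℝ) ^ j⌋ = k := by
  have h : (0 : ℝ) < 2 ^ j := by positivity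
  rw [dyadicI, mem_Ico, Int.floor_eq_iff, _root_.zpow_neg, ← div_eq_mul_inv, ← div_eq_mul_inv,
    div_le_iff₀ h, lt_div_iff₀ h]

/-- The index of the ancestor at generation `j` is determined by the index at generation `j'`. -/
lemma floor_coarse {j j' : ℤ} (h : j ≤ j') (x : ℝ) :
    ⌊x * (2 : ℝ) ^ j⌋ = ⌊x * (2 : ℝ) ^ j'⌋ / ((2 ^ (j' - j).toNat : ℕ) : ℤ) := by
  rw [← Int.floor_div_natCast (k := ℝ)]
  congr 1
  have h1 : ((2 ^ (j' - j).toNat : ℕ) : ℝ) = (2 : ℝ) ^ (j' - j) := by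
    push_cast
    rw [← zpow_natCast, Int.toNat_of_nonneg (by omega)]
  rw [h1, mul_div_assoc, ← zpow_sub₀ (by norm_num)]
  congr 2
  ring

lemma floor_succ (j : ℤ) (x : ℝ) :
    ⌊x * (2 : ℝ) ^ j⌋ = ⌊x * (2 : ℝ) ^ (j + 1)⌋ / 2 := by
  have := floor_coarse (show j ≤ j + 1 by omega) x
  simpa using this

lemma measurableSet_dyadicI (j k : ℤ) : MeasurableSet (dyadicI j k) := measurableSet_Ico

lemma volume_dyadicI (j k : ℤ) : volume (dyadicI j k) = ENNReal.ofReal ((2 : ℝ) ^ (-j)) := by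
  rw [dyadicI, Real.volume_Ico]
  congr 1
  ring

lemma haar_eq_zero {j k : ℤ} {x : ℝ} (h : x ∉ dyadicI j k) : haar j k x = 0 := by
  rw [mem_dyadicI, floor_succ] at h
  have h1 : x ∉ dyadicI (j + 1) (2 * k) := by rw [mem_dyadicI]; omega
  have h2 : x ∉ dyadicI (j + 1) (2 * k + 1) := by rw [mem_dyadicI]; omega
  simp [haar, h1, h2]

lemma haar_mul_self (j k : ℤ) (x : ℝ) :
    haar j k x * haar j k x = (dyadicI j k).indicator (fun _ => (2 : ℝ) ^ j) x := by
  by_cases h : x ∈ dyadicI j k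
  · rw [indicator_of_mem h]
    have hs : Real.sqrt ((2 : ℝ) ^ j) * Real.sqrt ((2 : ℝ) ^ j) = 2 ^ j :=
      Real.mul_self_sqrt (by positivity)
    rw [mem_dyadicI, floor_succ] at h
    by_cases h1 : x ∈ dyadicI (j + 1) (2 * k)
    · have h2 : x ∉ dyadicI (j + 1) (2 * k + 1) := by rw [mem_dyadicI] at h1 ⊢; omega
      simpa [haar, h1, h2] using hs
    · have h2 : x ∈ dyadicI (j + 1) (2 * k + 1) := by rw [mem_dyadicI] at h1 ⊢; omega
      simpa [haar, h1, h2] using hs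
  · rw [haar_eq_zero h, indicator_of_notMem h, mul_zero]

/-- A Haar function is constant on every dyadic interval of a strictly finer generation. -/
lemma haar_const {j j' : ℤ} (h : j < j') (k k' : ℤ) :
    ∃ c : ℝ, ∀ x ∈ dyadicI j' k', haar j k x = c := by
  have hmem : ∀ m : ℤ, ∀ x ∈ dyadicI j' k', (x ∈ dyadicI (j + 1) m ↔
      k' / ((2 ^ (j' - (j + 1)).toNat : ℕ) : ℤ) = m) := by
    intro m x hx
    rw [mem_dyadicI] at hx ⊢
    rw [floor_coarse (show j + 1 ≤ j' by omega), hx]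
  classical
  refine ⟨Real.sqrt ((2 : ℝ) ^ j) *
    ((if k' / ((2 ^ (j' - (j + 1)).toNat : ℕ) : ℤ) = 2 * k then 1 else 0) -
      (if k' / ((2 ^ (j' - (j + 1)).toNat : ℕ) : ℤ) = 2 * k + 1 then 1 else 0)), fun x hx => ?_⟩
  simp only [haar, indicator_apply, hmem _ x hx]

lemma integrable_indicator_dyadicI (j k : ℤ) (c : ℝ) :
    Integrable ((dyadicI j k).indicator (fun _ => c)) := by
  rw [integrable_indicator_iff (measurableSet_dyadicI j k)]
  exact integrableOn_const (by simp [volume_dyadicI])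

lemma integral_indicator_dyadicI (j k : ℤ) (c : ℝ) :
    ∫ x, (dyadicI j k).indicator (fun _ => c) x = (2 : ℝ) ^ (-j) * c := by
  rw [integral_indicator_const _ (measurableSet_dyadicI j k), Measure.real, volume_dyadicI,
    ENNReal.toReal_ofReal (by positivity), smul_eq_mul]

lemma measurable_haar (j k : ℤ) : Measurable (haar j k) := by
  unfold haar
  exact ((measurable_const.indicator (measurableSet_dyadicI _ _)).sub
    (measurable_const.indicator (measurableSet_dyadicI _ _))).const_mul _

lemma integral_haar (j k : ℤ) : ∫ x, haar j k x = 0 := by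
  unfold haar
  rw [integral_const_mul, integral_sub (integrable_indicator_dyadicI _ _ _)
    (integrable_indicator_dyadicI _ _ _), integral_indicator_dyadicI, integral_indicator_dyadicI]
  simp

lemma integral_haar_mul_of_lt {j j' : ℤ} (h : j < j') (k k' : ℤ) :
    ∫ x, haar j k x * haar j' k' x = 0 := by
  obtain ⟨c, hc⟩ := haar_const h k k'
  have : ∀ x, haar j k x * haar j' k' x = c * haar j' k' x := by
    intro x
    by_cases hx : x ∈ dyadicI j' k'
    · rw [hc x hx]
    · rw [haar_eq_zero hx, mul_zero, mul_zero]
  simp_rw [this]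
  rw [integral_const_mul, integral_haar, mul_zero]

lemma integral_haar_mul (q q' : ℤ × ℤ) :
    ∫ x, haar q.1 q.2 x * haar q'.1 q'.2 x = if q = q' then 1 else 0 := by
  obtain ⟨j, k⟩ := q
  obtain ⟨j', k'⟩ := q'
  dsimp only
  rcases lt_trichotomy j j' with h | h | h
  · rw [integral_haar_mul_of_lt h, if_neg (by simp [h.ne])]
  · subst h
    by_cases hk : k = k'
    · subst hk
      simp_rw [haar_mul_self]
      rw [integral_indicator_dyadicI, ← zpow_add₀ (by norm_num)]
      simp
    · rw [if_neg (by simp [hk])]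
      have : ∀ x, haar j k x * haar j k' x = 0 := by
        intro x
        by_cases hx : x ∈ dyadicI j k
        · rw [haar_eq_zero (k := k'), mul_zero]
          rw [mem_dyadicI] at hx ⊢
          omega
        · rw [haar_eq_zero hx, zero_mul]
      simp [this]
  · simp_rw [mul_comm (haar j k _)]
    rw [integral_haar_mul_of_lt h, if_neg (by simp [h.ne'])]

lemma memLp_haar (q : ℤ × ℤ) : MemLp (fun x => (haar q.1 q.2 x : ℂ)) 2 volume := by
  have hm : Measurable (haar q.1 q.2) := measurable_haar _ _
  have h : MemLp (haar q.1 q.2) 2 volume := by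
    rw [memLp_two_iff_integrable_sq hm.aestronglyMeasurable]
    simp_rw [sq, haar_mul_self]
    exact integrable_indicator_dyadicI _ _ _
  exact h.ofReal

/-- The Haar function as an element of `L²(ℝ; ℂ)`. -/
def haarLp (q : ℤ × ℤ) : Lp ℂ 2 (volume : Measure ℝ) := (memLp_haar q).toLp _

lemma orthonormal_haarLp : Orthonormal ℂ haarLp := by
  classical
  rw [orthonormal_iff_ite]
  intro q q'
  rw [L2.inner_def]
  have h1 : ∫ x, inner ℂ (haarLp q x) (haarLp q' x) =
      ∫ x, ((haar q.1 q.2 x * haar q'.1 q'.2 x : ℝ) : ℂ) := by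
    refine integral_congr_ae ?_
    filter_upwards [(memLp_haar q).coeFn_toLp, (memLp_haar q').coeFn_toLp] with x hx hx'
    rw [haarLp, haarLp, hx, hx']
    simp [mul_comm]
  rw [h1, integral_complex_ofReal, integral_haar_mul]
  split_ifs <;> simp

/-- Bessel's inequality for the Haar system; it is trivially true when `u ∉ L²`, whatever value
the integrals on the left then take. -/
lemma bessel_haar (u : ℝ → ℂ) (hu : Measurable u) :
    ∑' q : ℤ × ℤ, ‖∫ t, u t * (haar q.1 q.2 t : ℂ)‖ₑ ^ 2 ≤ ∫⁻ t, ‖u t‖ₑ ^ 2 := by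
  by_cases hfin : ∫⁻ t, ‖u t‖ₑ ^ 2 = ⊤
  · rw [hfin]; exact le_top
  have hnorm : eLpNorm u 2 volume ^ 2 = ∫⁻ t, ‖u t‖ₑ ^ 2 := by
    rw [eLpNorm_eq_lintegral_rpow_enorm_toReal (by norm_num) (by norm_num)]
    simp only [ENNReal.toReal_ofNat, ENNReal.rpow_ofNat]
    rw [← ENNReal.rpow_natCast, ← ENNReal.rpow_mul]
    simp
  have hmem : MemLp u 2 volume := by
    refine ⟨hu.aestronglyMeasurable, ?_⟩
    by_contra h
    rw [not_lt, top_le_iff] at h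
    rw [h] at hnorm
    exact hfin (by rw [← hnorm]; simp)
  have hinner : ∀ q : ℤ × ℤ, ∫ t, u t * (haar q.1 q.2 t : ℂ) =
      inner ℂ (haarLp q) (hmem.toLp u) := by
    intro q
    rw [L2.inner_def]
    refine integral_congr_ae ?_
    filter_upwards [(memLp_haar q).coeFn_toLp, hmem.coeFn_toLp] with x hx hx'
    rw [haarLp, hx, hx']
    simp
  rw [ENNReal.tsum_eq_iSup_sum]
  refine iSup_le fun s => ?_
  have hb := orthonormal_haarLp.sum_inner_products_le (hmem.toLp u) (s := s)
  calc ∑ q ∈ s, ‖∫ t, u t * (haar q.1 q.2 t : ℂ)‖ₑ ^ 2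
      = ENNReal.ofReal (∑ q ∈ s, ‖inner ℂ (haarLp q) (hmem.toLp u)‖ ^ 2) := by
        rw [ENNReal.ofReal_sum_of_nonneg (fun _ _ => by positivity)]
        refine Finset.sum_congr rfl fun q _ => ?_
        rw [hinner, ENNReal.ofReal_pow (norm_nonneg _), ofReal_norm]
    _ ≤ ENNReal.ofReal (‖hmem.toLp u‖ ^ 2) := ENNReal.ofReal_le_ofReal hb
    _ = ∫⁻ t, ‖u t‖ₑ ^ 2 := by
        rw [ENNReal.ofReal_pow (norm_nonneg _), Lp.norm_toLp,
          ENNReal.ofReal_toReal hmem.eLpNorm_ne_top, hnorm]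

/-! ### The hybrid operator -/

lemma L2V_sq (d : ℕ) (f : ℝ × ℝ → Fin d → ℂ) :
    L2V d f = (∫⁻ p : ℝ × ℝ, ∑ i, ‖f p i‖ₑ ^ 2) ^ ((1 : ℝ) / 2) := by
  rw [L2V, eLpNorm_eq_lintegral_rpow_enorm_toReal (by norm_num) (by norm_num)]
  simp only [ENNReal.toReal_ofNat, ENNReal.rpow_ofNat]
  congr 1
  refine lintegral_congr fun p => ?_
  rw [← ofReal_norm, ← ENNReal.ofReal_pow (norm_nonneg _), EuclideanSpace.norm_sq_eq,
    ENNReal.ofReal_sum_of_nonneg (fun _ _ => by positivity)]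
  refine Finset.sum_congr rfl fun i _ => ?_
  rw [ENNReal.ofReal_pow (norm_nonneg _), ofReal_norm]
  rfl

/-- **`L²` boundedness of the hybrid maximal–square operator**
`S̃f(x,y) = (Σ_I (M₂‖⟨f,h_I⟩₁‖_{ℂ^d})(y)² 1_I(x)/|I|)^{1/2}`:
`‖S̃f‖_{L²(ℝ²)} ≤ C ‖f‖_{L²(ℝ²;ℂ^d)}` for an absolute constant `C`. -/
theorem hybrid_maximal_square_function_bound :
    ∃ C : ℝ, 0 < C ∧
      ∀ (d : ℕ) (f : ℝ × ℝ → Fin d → ℂ), Measurable f → L2V d f < ⊤ →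
        (∫⁻ p : ℝ × ℝ,
            ∑' q : ℤ × ℤ,
              (M1D (fun y => Real.sqrt
                    (∑ i, ‖∫ t : ℝ, f (t, y) i * (haar q.1 q.2 t : ℂ)‖ ^ 2)) p.2) ^ 2 *
                (dyadicI q.1 q.2).indicator (fun _ => (1 : ℝ≥0∞)) p.1 *
                ENNReal.ofReal ((2 : ℝ) ^ q.1)) ^ ((1 : ℝ) / 2) ≤
          ENNReal.ofReal C * L2V d f := by
  refine ⟨7, by norm_num, fun d f hf _ => ?_⟩
  -- `g q y` is the Euclidean norm of the partial Haar coefficient `⟨f, h_I⟩₁(y)`.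
  set g : ℤ × ℤ → ℝ → ℝ := fun q y => Real.sqrt
    (∑ i, ‖∫ t : ℝ, f (t, y) i * (haar q.1 q.2 t : ℂ)‖ ^ 2) with hg
  have hfi : ∀ i, Measurable fun p => f p i := fun i => (measurable_pi_apply i).comp hf
  have hcoef : ∀ q : ℤ × ℤ, ∀ i,
      Measurable fun y => ∫ t : ℝ, f (t, y) i * (haar q.1 q.2 t : ℂ) := by
    intro q i
    have hm : Measurable fun z : ℝ × ℝ => f z i * (haar q.1 q.2 z.1 : ℂ) :=
      (hfi i).mul (Complex.measurable_ofReal.comp ((measurable_haar q.1 q.2).comp measurable_fst))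
    exact hm.stronglyMeasurable.integral_prod_left.measurable
  have hgm : ∀ q, Measurable fun y => ENNReal.ofReal |g q y| := by
    intro q
    have h1 : Measurable (g q) :=
      (Finset.measurable_sum _ fun i _ => (hcoef q i).norm.pow_const 2).sqrt
    exact ENNReal.measurable_ofReal.comp h1.abs
  have hgsq : ∀ q y, ENNReal.ofReal |g q y| ^ 2 =
      ∑ i, ‖∫ t : ℝ, f (t, y) i * (haar q.1 q.2 t : ℂ)‖ₑ ^ 2 := by
    intro q y
    rw [← ENNReal.ofReal_pow (abs_nonneg _), sq_abs, Real.sq_sqrt (by positivity),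
      ENNReal.ofReal_sum_of_nonneg (fun _ _ => by positivity)]
    refine Finset.sum_congr rfl fun i _ => ?_
    rw [ENNReal.ofReal_pow (norm_nonneg _), ofReal_norm]
  have hmax : ∀ q, ∫⁻ p : ℝ × ℝ, (M1D (g q) p.2) ^ 2 *
      (dyadicI q.1 q.2).indicator (fun _ => (1 : ℝ≥0∞)) p.1 * ENNReal.ofReal ((2 : ℝ) ^ q.1) ≤
      40 * ∫⁻ y, ∑ i, ‖∫ t : ℝ, f (t, y) i * (haar q.1 q.2 t : ℂ)‖ₑ ^ 2 := by
    intro q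
    have hM : Measurable (M1D (g q)) := measurable_maxFn fun y => ENNReal.ofReal |g q y|
    have hI : Measurable ((dyadicI q.1 q.2).indicator (fun _ => (1 : ℝ≥0∞))) :=
      measurable_const.indicator (measurableSet_dyadicI _ _)
    calc ∫⁻ p : ℝ × ℝ, (M1D (g q) p.2) ^ 2 *
        (dyadicI q.1 q.2).indicator (fun _ => (1 : ℝ≥0∞)) p.1 * ENNReal.ofReal ((2 : ℝ) ^ q.1)
        = (∫⁻ p : ℝ × ℝ, (dyadicI q.1 q.2).indicator (fun _ => (1 : ℝ≥0∞)) p.1 *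
            (M1D (g q) p.2) ^ 2) * ENNReal.ofReal ((2 : ℝ) ^ q.1) := by
          rw [lintegral_mul_const' _ _ ENNReal.ofReal_ne_top]
          simp_rw [mul_comm ((M1D (g q) _) ^ 2)]
      _ = ∫⁻ y, (M1D (g q) y) ^ 2 := by
          rw [Measure.volume_eq_prod, lintegral_prod_mul hI.aemeasurable
            (hM.pow_const 2).aemeasurable, lintegral_indicator (measurableSet_dyadicI _ _),
            setLIntegral_one, volume_dyadicI, mul_right_comm,
            ← ENNReal.ofReal_mul (by positivity), ← zpow_add₀ (by norm_num)]
          simp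
      _ ≤ 40 * ∫⁻ y, ENNReal.ofReal |g q y| ^ 2 := maxFn_L2 _ (hgm q)
      _ = _ := by simp_rw [hgsq]
  have hmain : ∫⁻ p : ℝ × ℝ, ∑' q : ℤ × ℤ, (M1D (g q) p.2) ^ 2 *
      (dyadicI q.1 q.2).indicator (fun _ => (1 : ℝ≥0∞)) p.1 * ENNReal.ofReal ((2 : ℝ) ^ q.1) ≤
      40 * ∫⁻ p : ℝ × ℝ, ∑ i, ‖f p i‖ₑ ^ 2 := by
    rw [lintegral_tsum]
    · calc _ ≤ ∑' q : ℤ × ℤ, 40 * ∫⁻ y, ∑ i,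
            ‖∫ t : ℝ, f (t, y) i * (haar q.1 q.2 t : ℂ)‖ₑ ^ 2 := ENNReal.tsum_le_tsum hmax
        _ = 40 * ∫⁻ y, ∑ i, ∑' q : ℤ × ℤ,
            ‖∫ t : ℝ, f (t, y) i * (haar q.1 q.2 t : ℂ)‖ₑ ^ 2 := by
          rw [ENNReal.tsum_mul_left, ← lintegral_tsum]
          · congr 1
            refine lintegral_congr fun y => ?_
            exact Summable.tsum_finsetSum fun _ _ => ENNReal.summable
          · intro q
            exact (Finset.measurable_sum _ fun i _ =>
              (hcoef q i).enorm.pow_const 2).aemeasurable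
        _ ≤ 40 * ∫⁻ y, ∑ i, ∫⁻ t, ‖f (t, y) i‖ₑ ^ 2 := by
          gcongr with y i
          exact bessel_haar _ ((hfi i).comp measurable_prodMk_right)
        _ = 40 * ∫⁻ p : ℝ × ℝ, ∑ i, ‖f p i‖ₑ ^ 2 := by
          congr 1
          rw [Measure.volume_eq_prod, lintegral_prod_symm _
            (Finset.measurable_sum _ fun i _ => (hfi i).enorm.pow_const 2).aemeasurable]
          refine lintegral_congr fun y => ?_
          rw [lintegral_finsetSum]
          exact fun i _ => ((hfi i).comp measurable_prodMk_right).enorm.pow_const 2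
    · intro q
      have hM : Measurable (M1D (g q)) := measurable_maxFn fun y => ENNReal.ofReal |g q y|
      exact ((((hM.comp measurable_snd).pow_const 2).mul
        ((measurable_const.indicator (measurableSet_dyadicI _ _)).comp
          measurable_fst)).mul_const _).aemeasurable
  rw [L2V_sq]
  -- `40 ≤ 7²`, so `7` is an admissible constant.
  calc _ ≤ ((ENNReal.ofReal 7) ^ (2 : ℝ) * ∫⁻ p : ℝ × ℝ, ∑ i, ‖f p i‖ₑ ^ 2) ^ ((1 : ℝ) / 2) := by
        refine ENNReal.rpow_le_rpow (hmain.trans ?_) (by norm_num)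
        gcongr
        rw [ENNReal.ofReal_ofNat]
        norm_num
    _ = ENNReal.ofReal 7 * (∫⁻ p : ℝ × ℝ, ∑ i, ‖f p i‖ₑ ^ 2) ^ ((1 : ℝ) / 2) := by
        rw [ENNReal.mul_rpow_of_nonneg _ _ (by norm_num), ← ENNReal.rpow_mul]
        norm_num
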